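/- Let u be a minimizer of the energy E, and let U ⊆ I be an open interval such that the restriction of f to U is Lipschitz with constant L ≥ 0. Then there is a function ū equal to u almost everywhere on I whose restriction to U is Lipschitz with the same constant L. -/

import Mathlib

open MeasureTheory Set Filter
open scoped ENNReal

noncomputable section

/-- Square-integrability of `w` on the set `S`. -/
def SqIntOn {n : ℕ} (w : ℝ → EuclideanSpace ℝ (Fin n)) (S : Set ℝ) : Prop :=
  MeasureTheory.IntegrableOn (fun x => ‖w x‖ ^ 2) S

/-- The Rudin–Osher–Fatemi energy with fidelity weight `1/(2 lam)`, datum `f`,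
on the interval `I = Ioo a b`. -/
def rofEnergy {n : ℕ} (lam a b : ℝ) (f w : ℝ → EuclideanSpace ℝ (Fin n)) : ℝ≥0∞ :=
  eVariationOn w (Set.Ioo a b) +
    ENNReal.ofReal ((1 / (2 * lam)) * ∫ x in Set.Ioo a b, ‖w x - f x‖ ^ 2)

/-- `u` is a minimizer of the ROF energy among Borel measurable functions
square-integrable on `Ioo a b`. -/
def IsMinimizer {n : ℕ} (lam a b : ℝ) (f u : ℝ → EuclideanSpace ℝ (Fin n)) : Prop :=
  Measurable u ∧ SqIntOn u (Set.Ioo a b) ∧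
    ∀ w : ℝ → EuclideanSpace ℝ (Fin n), Measurable w → SqIntOn w (Set.Ioo a b) →
      rofEnergy lam a b f u ≤ rofEnergy lam a b f w

/-!
The first variation at a minimizer `u` says that `p = (f - u) / lam` is a subgradient of the total
variation, so the dual field `z x = ∫ t in x..b, p t` satisfies `‖z‖ ≤ 1`. Let `V s t` be the
variation of `u` between `s` and `t`. Testing the subgradient inequality with the competitor
obtained by freezing `u` on `[s, t]` gives, for `x ∈ [s, t]`,
`V s t ≤ ⟪z x, u t - u s⟫ + V s t * ∫ r in s..t, ‖p r‖`, where the last term is of lower order.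

Where `‖z x‖ < 1`, this forces `u` to be constant near `x`. Where `‖z x‖ = 1`, the point `x`
maximizes `⟪z x, z⟫`, so the second difference there, which is minus the integral of
`⟪z x, p t - p (t - δ)⟫` over `[x, x + δ]`, is nonpositive. As `u = f - lam • p`, the integral of
`⟪z x, u t - u (t - δ)⟫` is then at most `L * δ ^ 2`. In both cases the primitive of the variation
function of `u` has second differences at most `(L + ε) * δ ^ 2`; as in Schwarz's theorem,
subtracting `L / 2 * x ^ 2` makes it concave, and hence the variation function is `L`-Lipschitz.
-/

section SecondDifference

open Topology

variable {g T : ℝ → ℝ} {a b c d L x y : ℝ}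

lemma eventually_Icc_sub_add_subset_Ioo (hx : a < x) (hy : y < b) :
    ∀ᶠ δ in 𝓝[>] (0 : ℝ), 0 < δ ∧ Icc (x - δ) (y + δ) ⊆ Ioo a b := by
  filter_upwards [Ioo_mem_nhdsGT (lt_min (sub_pos.2 hx) (sub_pos.2 hy))] with δ ⟨hδ, hδm⟩
  obtain ⟨hδa, hδb⟩ := lt_min_iff.1 hδm
  exact ⟨hδ, Icc_subset_Ioo (by linarith) (by linarith)⟩

lemma nonneg_of_frequently_second_difference_le (hg : ContinuousOn g (Icc a b)) (ha : 0 ≤ g a)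
    (hb : 0 ≤ g b)
    (h : ∀ x ∈ Ioo a b, ∀ ε > 0,
      ∃ᶠ δ in 𝓝[>] (0 : ℝ), g (x + δ) + g (x - δ) - 2 * g x ≤ ε * δ ^ 2)
    (hx : x ∈ Icc a b) : 0 ≤ g x := by
  suffices H : ∀ ε > 0, 0 ≤ g x + ε * ((x - a) * (b - x)) by
    have hlim : Tendsto (fun ε : ℝ => g x + ε * ((x - a) * (b - x))) (𝓝[>] 0) (𝓝 (g x)) := by
      have : ContinuousAt (fun ε : ℝ => g x + ε * ((x - a) * (b - x))) 0 := by fun_prop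
      simpa [ContinuousAt] using this.tendsto.mono_left nhdsWithin_le_nhds
    exact ge_of_tendsto hlim (eventually_mem_nhdsWithin.mono H)
  intro ε hε
  -- The perturbation makes second differences strictly negative at an interior minimum.
  let gε : ℝ → ℝ := fun t => g t + ε * ((t - a) * (b - t))
  have hcont : ContinuousOn gε (Icc a b) := hg.add (by fun_prop)
  obtain ⟨m, hm, hmin⟩ := isCompact_Icc.exists_isMinOn ⟨x, hx⟩ hcont
  refine le_trans ?_ (hmin hx)
  rcases hm.1.eq_or_lt with rfl | ham
  · simpa [gε] using ha
  rcases hm.2.eq_or_lt with rfl | hmb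
  · simpa [gε] using hb
  obtain ⟨δ, hδ, hδ0, hsub⟩ := ((h m ⟨ham, hmb⟩ ε hε).and_eventually
    (eventually_Icc_sub_add_subset_Ioo ham hmb)).exists
  have hright : gε m ≤ gε (m + δ) := hmin (Ioo_subset_Icc_self (hsub ⟨by linarith, le_rfl⟩))
  have hleft : gε m ≤ gε (m - δ) := hmin (Ioo_subset_Icc_self (hsub ⟨le_rfl, by linarith⟩))
  simp only [gε] at hright hleft
  have : 0 < ε * δ ^ 2 := by positivity
  linarith

theorem concaveOn_of_frequently_second_difference_le {s : Set ℝ} (hs : Convex ℝ s)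
    (hg : ContinuousOn g s)
    (h : ∀ x ∈ interior s, ∀ ε > 0,
      ∃ᶠ δ in 𝓝[>] (0 : ℝ), g (x + δ) + g (x - δ) - 2 * g x ≤ ε * δ ^ 2) :
    ConcaveOn ℝ s g := by
  refine concaveOn_of_slope_anti_adjacent hs fun {x y z} hx hz hxy hyz => ?_
  have hIcc : Icc x z ⊆ s := hs.ordConnected.out hx hz
  have hIoo : Ioo x z ⊆ interior s := interior_Icc (a := x) ▸ interior_mono hIcc
  have hxz : 0 < z - x := by linarith
  let chord : ℝ → ℝ := fun t => g x + (g z - g x) / (z - x) * (t - x)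
  have hchord : chord y ≤ g y := by
    refine sub_nonneg.1 (nonneg_of_frequently_second_difference_le (g := fun t => g t - chord t)
      ((hg.mono hIcc).sub (by fun_prop)) (by simp [chord]) (by simp [chord, hxz.ne'])
      (fun t ht ε hε => (h t (hIoo ht) ε hε).mono fun δ hδ => ?_) ⟨hxy.le, hyz.le⟩)
    simp only [chord]
    linarith
  have hchord' : g x * (z - y) + g z * (y - x) ≤ g y * (z - x) := by
    calc g x * (z - y) + g z * (y - x) = chord y * (z - x) := by simp only [chord]; field_simp; ring
      _ ≤ g y * (z - x) := by gcongr
  rw [div_le_div_iff₀ (sub_pos.2 hyz) (sub_pos.2 hxy)]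
  linarith

lemma mul_sub_le_integral_of_monotoneOn (hT : MonotoneOn T (Icc a b)) (hab : a ≤ b) :
    T a * (b - a) ≤ ∫ t in a..b, T t := by
  simpa [mul_comm] using intervalIntegral.integral_mono_on hab intervalIntegrable_const
    (MonotoneOn.intervalIntegrable (μ := volume) (uIcc_of_le hab ▸ hT))
    fun t ht => hT ⟨le_rfl, hab⟩ ht ht.1

lemma integral_le_mul_sub_of_monotoneOn (hT : MonotoneOn T (Icc a b)) (hab : a ≤ b) :
    ∫ t in a..b, T t ≤ T b * (b - a) := by
  simpa [mul_comm] using intervalIntegral.integral_mono_on hab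
    (MonotoneOn.intervalIntegrable (μ := volume) (uIcc_of_le hab ▸ hT)) intervalIntegrable_const
    fun t ht => hT ht ⟨hab, le_rfl⟩ ht.2

lemma concaveOn_integral_sub_sq (hT : MonotoneOn T (Icc a b))
    (h : ∀ x ∈ Ioo a b, ∀ ε > 0, ∃ᶠ δ in 𝓝[>] (0 : ℝ),
      (∫ t in x..x + δ, T t) - (∫ t in x - δ..x, T t) ≤ (L + ε) * δ ^ 2) :
    ConcaveOn ℝ (Icc a b) fun x => (∫ t in a..x, T t) - L / 2 * x ^ 2 := by
  rcases lt_or_ge b a with hba | hab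
  · exact ⟨convex_Icc a b, by simp [Icc_eq_empty hba.not_ge]⟩
  have hint : ∀ {x y : ℝ}, x ∈ Icc a b → y ∈ Icc a b → IntervalIntegrable T volume x y :=
    fun hx hy => (hT.mono (OrdConnected.uIcc_subset ordConnected_Icc hx hy)).intervalIntegrable
  have ha : a ∈ Icc a b := ⟨le_rfl, hab⟩
  have hcont : ContinuousOn (fun x => ∫ t in a..x, T t) (Icc a b) := by
    simpa [uIcc_of_le hab] using intervalIntegral.continuousOn_primitive_interval'
      (hint ha ⟨hab, le_rfl⟩) (uIcc_of_le hab ▸ ha)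
  refine concaveOn_of_frequently_second_difference_le (convex_Icc a b)
    (hcont.sub (by fun_prop)) fun x hx ε hε => ?_
  rw [interior_Icc] at hx
  refine ((h x hx ε hε).and_eventually (eventually_Icc_sub_add_subset_Ioo hx.1 hx.2)).mono
    fun δ ⟨hδ, hδ0, hsub⟩ => ?_
  have hxm : x ∈ Icc a b := Ioo_subset_Icc_self hx
  have hxl : x - δ ∈ Icc a b := Ioo_subset_Icc_self (hsub ⟨le_rfl, by linarith [hδ0]⟩)
  have hxr : x + δ ∈ Icc a b := Ioo_subset_Icc_self (hsub ⟨by linarith [hδ0], le_rfl⟩)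
  have hright := intervalIntegral.integral_add_adjacent_intervals (hint ha hxm) (hint hxm hxr)
  have hleft := intervalIntegral.integral_add_adjacent_intervals (hint ha hxl) (hint hxl hxm)
  linarith [hδ]

theorem sub_le_mul_sub_of_frequently_integral_sub_integral_le (hT : MonotoneOn T (Ioo c d))
    (h : ∀ x ∈ Ioo c d, ∀ ε > 0, ∃ᶠ δ in 𝓝[>] (0 : ℝ),
      (∫ t in x..x + δ, T t) - (∫ t in x - δ..x, T t) ≤ (L + ε) * δ ^ 2)
    (hx : x ∈ Ioo c d) (hy : y ∈ Ioo c d) (hxy : x ≤ y) : T y - T x ≤ L * (y - x) := by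
  rcases hxy.eq_or_lt with rfl | hxy
  · simp
  have hlim : Tendsto (fun η : ℝ => L * (y - x + η)) (𝓝[>] 0) (𝓝 (L * (y - x))) := by
    have : ContinuousAt (fun η : ℝ => L * (y - x + η)) 0 := by fun_prop
    simpa [ContinuousAt] using this.tendsto.mono_left nhdsWithin_le_nhds
  refine ge_of_tendsto hlim ((eventually_Icc_sub_add_subset_Ioo hx.1 hy.2).mono
    fun η ⟨hη, hsub⟩ => ?_)
  have hTη := hT.mono hsub
  have hconc := concaveOn_integral_sub_sq hTη fun t ht => h t (hsub (Ioo_subset_Icc_self ht))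
  have hl : x - η ∈ Icc (x - η) (y + η) := ⟨le_rfl, by linarith⟩
  have hr : y + η ∈ Icc (x - η) (y + η) := ⟨by linarith, le_rfl⟩
  have hx' : x ∈ Icc (x - η) (y + η) := ⟨by linarith, by linarith⟩
  have hy' : y ∈ Icc (x - η) (y + η) := ⟨by linarith, by linarith⟩
  have hslope := (hconc.slope_anti_adjacent hx' hr hxy (by linarith)).trans
    (hconc.slope_anti_adjacent hl hy' (by linarith) hxy)
  have hint := hTη.mono (OrdConnected.uIcc_subset ordConnected_Icc hl hy') |>.intervalIntegrable
    (μ := volume)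
  have hint' := hTη.mono (OrdConnected.uIcc_subset ordConnected_Icc hy' hr) |>.intervalIntegrable
    (μ := volume)
  have hadd := intervalIntegral.integral_add_adjacent_intervals hint hint'
  have hright := mul_sub_le_integral_of_monotoneOn (hTη.mono (Icc_subset_Icc_left hy'.1))
    (by linarith)
  have hleft := integral_le_mul_sub_of_monotoneOn (hTη.mono (Icc_subset_Icc_right hx'.2))
    (by linarith)
  rw [add_sub_cancel_left, sub_sub_cancel, div_le_div_iff_of_pos_right hη] at hslope
  simp only [intervalIntegral.integral_same] at hslope
  refine le_of_mul_le_mul_right ?_ hη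
  linarith

end SecondDifference

section TotalVariation

variable {α E : Type*} [LinearOrder α]

section Convexity

variable [SeminormedAddCommGroup E] {u v : α → E} {s : Set α}

lemma eVariationOn_add_le : eVariationOn (u + v) s ≤ eVariationOn u s + eVariationOn v s := by
  refine iSup_le fun p => ?_
  calc ∑ i ∈ Finset.range p.1, edist ((u + v) (p.2.1 (i + 1))) ((u + v) (p.2.1 i))
      ≤ ∑ i ∈ Finset.range p.1, (edist (u (p.2.1 (i + 1))) (u (p.2.1 i))
          + edist (v (p.2.1 (i + 1))) (v (p.2.1 i))) :=
        Finset.sum_le_sum fun _ _ => edist_add_add_le _ _ _ _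
    _ ≤ eVariationOn u s + eVariationOn v s := by
        rw [Finset.sum_add_distrib]
        exact add_le_add (eVariationOn.sum_le p.2.2.1 p.2.2.2) (eVariationOn.sum_le p.2.2.1 p.2.2.2)

lemma eVariationOn_const_smul_le [NormedSpace ℝ E] (c : ℝ) :
    eVariationOn (c • u) s ≤ ‖c‖ₑ * eVariationOn u s :=
  (lipschitzWith_smul c).lipschitzOnWith.comp_eVariationOn_le (mapsTo_univ u s)

lemma convexOn_toReal_eVariationOn [NormedSpace ℝ E] :
    ConvexOn ℝ {u : α → E | BoundedVariationOn u s} fun u => (eVariationOn u s).toReal := by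
  have hle : ∀ {u v : α → E} {c d : ℝ}, 0 ≤ c → 0 ≤ d → eVariationOn (c • u + d • v) s ≤
      ENNReal.ofReal c * eVariationOn u s + ENNReal.ofReal d * eVariationOn v s := by
    intro u v c d hc hd
    rw [← Real.enorm_of_nonneg hc, ← Real.enorm_of_nonneg hd]
    exact eVariationOn_add_le.trans
      (add_le_add (eVariationOn_const_smul_le c) (eVariationOn_const_smul_le d))
  have hfin : ∀ {u v : α → E} (c d : ℝ), BoundedVariationOn u s → BoundedVariationOn v s →
      ENNReal.ofReal c * eVariationOn u s + ENNReal.ofReal d * eVariationOn v s ≠ ∞ :=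
    fun c d hu hv => ENNReal.add_ne_top.2
      ⟨ENNReal.mul_ne_top ENNReal.ofReal_ne_top hu, ENNReal.mul_ne_top ENNReal.ofReal_ne_top hv⟩
  refine ⟨fun u hu v hv c d hc hd _ => ne_top_of_le_ne_top (hfin c d hu hv) (hle hc hd),
    fun u hu v hv c d hc hd _ => ?_⟩
  refine (ENNReal.toReal_mono (hfin c d hu hv) (hle hc hd)).trans_eq ?_
  rw [ENNReal.toReal_add (ENNReal.mul_ne_top ENNReal.ofReal_ne_top hu)
    (ENNReal.mul_ne_top ENNReal.ofReal_ne_top hv)]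
  simp [ENNReal.toReal_ofReal hc, ENNReal.toReal_ofReal hd]

end Convexity

lemma eVariationOn_indicator_Ioi_le [SeminormedAddCommGroup E] (x : α) (e : E) (s : Set α) :
    eVariationOn ((Ioi x).indicator fun _ => e) s ≤ ‖e‖ₑ := by
  classical
  let step : Bool → E := fun i => if i then e else 0
  let φ : α → Bool := fun r => decide (x < r)
  have hφ : Monotone φ := fun p q hpq => by
    simpa [φ, Bool.le_iff_imp] using fun hp : x < p => hp.trans_le hpq
  have hstep : (Ioi x).indicator (fun _ => e) = step ∘ φ := by
    ext r
    simp [step, φ, indicator]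
  calc eVariationOn ((Ioi x).indicator fun _ => e) s
      ≤ eVariationOn step univ :=
        hstep ▸ eVariationOn.comp_le_of_monotoneOn step φ (hφ.monotoneOn s) (mapsTo_univ φ s)
    _ = ‖e‖ₑ := by simp [step, Bool.univ_eq, eVariationOn.pair, edist_comm (0 : E)]

lemma eVariationOn_inter_Iic_add_inter_Ici {F : Type*} [PseudoEMetricSpace F] (u : α → F)
    {S : Set α} {s : α} (hs : s ∈ S) :
    eVariationOn u (S ∩ Iic s) + eVariationOn u (S ∩ Ici s) = eVariationOn u S := by
  rw [← eVariationOn.union u (x := s) (s := S ∩ Iic s) (t := S ∩ Ici s)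
    ⟨⟨hs, le_rfl⟩, fun _ h => h.2⟩ ⟨⟨hs, le_rfl⟩, fun _ h => h.2⟩,
    ← inter_union_distrib_left, Iic_union_Ici, inter_univ]

lemma eVariationOn_sub_const [SeminormedAddCommGroup E] (u : α → E) (e : E) (s : Set α) :
    eVariationOn (fun r => u r - e) s = eVariationOn u s := by
  simp only [eVariationOn, edist_sub_right]

lemma eVariationOn_sub_comp_clamp_add [SeminormedAddCommGroup E] (u : α → E) {S : Set α} {s t : α}
    (hs : s ∈ S) (ht : t ∈ S) (hst : s ≤ t) :
    eVariationOn (fun r => u r - u (max s (min t r))) S + eVariationOn u (S ∩ Icc s t) =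
      eVariationOn u S := by
  have hsplit : ∀ v : α → E, eVariationOn v S = eVariationOn v (S ∩ Iic s) +
      (eVariationOn v (S ∩ Icc s t) + eVariationOn v (S ∩ Ici t)) := by
    intro v
    have hmid := eVariationOn_inter_Iic_add_inter_Ici v (S := S ∩ Ici s) (s := t) ⟨ht, hst⟩
    rw [inter_assoc, Ici_inter_Iic, inter_assoc, Ici_inter_Ici, max_eq_right hst] at hmid
    rw [hmid, eVariationOn_inter_Iic_add_inter_Ici v hs]
  let v : α → E := fun r => u r - u (max s (min t r))
  have hleft : eVariationOn v (S ∩ Iic s) = eVariationOn u (S ∩ Iic s) := by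
    rw [← eVariationOn_sub_const u (u s)]
    refine eVariationOn.congr fun r hr => ?_
    simp [v, min_eq_right (hr.2.trans hst), max_eq_left hr.2]
  have hmid : eVariationOn v (S ∩ Icc s t) = 0 := by
    refine eVariationOn.constant_on (subsingleton_of_subset_singleton (a := 0) ?_)
    rintro _ ⟨r, hr, rfl⟩
    simp [v, min_eq_right hr.2.2, max_eq_right hr.2.1]
  have hright : eVariationOn v (S ∩ Ici t) = eVariationOn u (S ∩ Ici t) := by
    rw [← eVariationOn_sub_const u (u t)]
    refine eVariationOn.congr fun r hr => ?_
    simp [v, min_eq_left hr.2, max_eq_right hst]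
  rw [hsplit v, hsplit u, hleft, hmid, hright]
  ring

lemma boundedVariationOn_comp_clamp [PseudoEMetricSpace E] {u : α → E} {S : Set α} {s t : α}
    (hu : BoundedVariationOn u S) (hs : s ∈ S) (ht : t ∈ S) :
    BoundedVariationOn (fun r => u (max s (min t r))) S := by
  refine ne_top_of_le_ne_top hu (eVariationOn.comp_le_of_monotoneOn u (fun r => max s (min t r))
    (fun p _ q _ hpq => max_le_max_left s (min_le_min_left t hpq)) fun r hr => ?_)
  rcases max_choice s (min t r) with h | h <;> rcases min_choice t r with h' | h' <;> simp_all

lemma norm_sub_le_variationOnFromTo [SeminormedAddCommGroup E] {u : α → E} {S : Set α}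
    {s t x y : α} (hu : LocallyBoundedVariationOn u S) (hst : Icc s t ⊆ S)
    (hx : x ∈ Icc s t) (hy : y ∈ Icc s t) : ‖u x - u y‖ ≤ variationOnFromTo u S s t := by
  have hle : s ≤ t := hx.1.trans hx.2
  rw [variationOnFromTo.eq_of_le u S hle, ← dist_eq_norm]
  exact BoundedVariationOn.dist_le (hu s t (hst ⟨le_rfl, hle⟩) (hst ⟨hle, le_rfl⟩))
    ⟨hst hx, hx⟩ ⟨hst hy, hy⟩

lemma norm_clamp_sub_jump_le [SeminormedAddCommGroup E] {u : α → E} {S : Set α}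
    {s t x : α} (hu : LocallyBoundedVariationOn u S) (hst : Icc s t ⊆ S)
    (hx : x ∈ Icc s t) (r : α) :
    ‖u (max s (min t r)) - u s - (Ioi x).indicator (fun _ => u t - u s) r‖ ≤
      (Icc s t).indicator (fun _ => variationOnFromTo u S s t) r := by
  have hle : s ≤ t := hx.1.trans hx.2
  have hs : s ∈ Icc s t := ⟨le_rfl, hle⟩
  have ht : t ∈ Icc s t := ⟨hle, le_rfl⟩
  rcases lt_or_ge r s with hrs | hsr
  · simp [(hrs.trans_le hx.1).not_gt, hrs.not_ge, min_eq_right (hrs.le.trans hle), hrs.le]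
  rcases lt_or_ge t r with htr | hrt
  · simp [hx.2.trans_lt htr, htr.not_ge, htr.le, hle]
  have hr : r ∈ Icc s t := ⟨hsr, hrt⟩
  rw [min_eq_right hrt, max_eq_right hsr, indicator_of_mem hr]
  by_cases hxr : x < r
  · simpa [hxr] using norm_sub_le_variationOnFromTo hu hst hr ht
  · simpa [hxr] using norm_sub_le_variationOnFromTo hu hst hr hs

end TotalVariation

section Integrability

variable {E : Type*} [NormedAddCommGroup E]

lemma memLp_of_boundedVariationOn {α : Type*} [LinearOrder α] [MeasurableSpace α] {μ : Measure α}
    {S : Set α} [IsFiniteMeasure (μ.restrict S)] (hS : MeasurableSet S) {u : α → E} {q : ℝ≥0∞}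
    (hu : AEStronglyMeasurable u (μ.restrict S)) (hV : BoundedVariationOn u S) :
    MemLp u q (μ.restrict S) := by
  rcases S.eq_empty_or_nonempty with rfl | ⟨m, hm⟩
  · simp
  refine MemLp.of_bound hu (‖u m‖ + (eVariationOn u S).toReal) ?_
  filter_upwards [ae_restrict_mem hS] with x hx
  calc ‖u x‖ ≤ ‖u m‖ + dist (u x) (u m) := dist_eq_norm (u x) (u m) ▸ norm_le_norm_add_norm_sub' _ _
    _ ≤ ‖u m‖ + (eVariationOn u S).toReal := by gcongr; exact hV.dist_le hx hm

lemma integrable_inner_of_memLp [InnerProductSpace ℝ E] {α : Type*} [MeasurableSpace α]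
    {μ : Measure α} {q r : ℝ≥0∞} [q.HolderConjugate r] {g h : α → E} (hg : MemLp g q μ)
    (hh : MemLp h r μ) : Integrable (fun x => inner ℝ (g x) (h x)) μ :=
  memLp_one_iff_integrable.1 ((innerSL ℝ (E := E)).memLp_of_bilin 1 hg hh)

lemma integral_norm_add_smul_sq [InnerProductSpace ℝ E] {α : Type*} [MeasurableSpace α]
    {μ : Measure α} {g φ : α → E} (hg : MemLp g 2 μ) (hφ : MemLp φ 2 μ) (t : ℝ) :
    ∫ x, ‖g x + t • φ x‖ ^ 2 ∂μ =
      (∫ x, ‖g x‖ ^ 2 ∂μ) + 2 * t * (∫ x, inner ℝ (g x) (φ x) ∂μ)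
        + t ^ 2 * ∫ x, ‖φ x‖ ^ 2 ∂μ := by
  have hexpand : ∀ x, ‖g x + t • φ x‖ ^ 2 =
      ‖g x‖ ^ 2 + 2 * t * inner ℝ (g x) (φ x) + t ^ 2 * ‖φ x‖ ^ 2 := fun x => by
    rw [norm_add_sq_real, inner_smul_right, norm_smul, mul_pow, Real.norm_eq_abs, sq_abs]
    ring
  have hg₂ : Integrable (fun x => ‖g x‖ ^ 2) μ := hg.integrable_norm_pow two_ne_zero
  have hφ₂ : Integrable (fun x => t ^ 2 * ‖φ x‖ ^ 2) μ :=
    (hφ.integrable_norm_pow two_ne_zero).const_mul _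
  have hgφ : Integrable (fun x => 2 * t * inner ℝ (g x) (φ x)) μ :=
    (integrable_inner_of_memLp hg hφ).const_mul _
  have hsum : Integrable (fun x => ‖g x‖ ^ 2 + 2 * t * inner ℝ (g x) (φ x)) μ := hg₂.add hgφ
  simp_rw [hexpand]
  rw [integral_add hsum hφ₂, integral_add hg₂ hgφ, integral_const_mul, integral_const_mul]

end Integrability

section IntervalIntegral

open Topology

variable {F : Type*} [NormedAddCommGroup F] {g : ℝ → F} {a b x y δ : ℝ}

lemma intervalIntegrable_of_integrableOn_Ioo (hg : IntegrableOn g (Ioo a b))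
    (hx : x ∈ Icc a b) (hy : y ∈ Icc a b) : IntervalIntegrable g volume x y :=
  ((integrableOn_Icc_iff_integrableOn_Ioo (by simp) (by simp)).2 hg |>.mono_set
    (ordConnected_Icc.uIcc_subset hx hy)).intervalIntegrable

lemma intervalIntegrable_left_right (hδ : 0 ≤ δ)
    (hg : IntervalIntegrable g volume (x - δ) (x + δ)) :
    IntervalIntegrable g volume (x - δ) x ∧ IntervalIntegrable g volume x (x + δ) := by
  have hx : x ∈ uIcc (x - δ) (x + δ) := mem_uIcc_of_le (by linarith) (by linarith)
  exact ⟨hg.mono_set (uIcc_subset_uIcc_left hx), hg.mono_set (uIcc_subset_uIcc_right hx)⟩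

lemma intervalIntegrable_sub_translate (hδ : 0 ≤ δ)
    (hg : IntervalIntegrable g volume (x - δ) (x + δ)) :
    IntervalIntegrable (fun t => g t - g (t - δ)) volume x (x + δ) := by
  obtain ⟨hleft, hright⟩ := intervalIntegrable_left_right hδ hg
  exact hright.sub (by simpa using hleft.comp_sub_right δ)

lemma integral_sub_translate [NormedSpace ℝ F] (hδ : 0 ≤ δ)
    (hg : IntervalIntegrable g volume (x - δ) (x + δ)) :
    ∫ t in x..x + δ, (g t - g (t - δ)) = (∫ t in x..x + δ, g t) - ∫ t in x - δ..x, g t := by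
  obtain ⟨hleft, hright⟩ := intervalIntegrable_left_right hδ hg
  rw [intervalIntegral.integral_sub hright (by simpa using hleft.comp_sub_right δ),
    intervalIntegral.integral_comp_sub_right, add_sub_cancel_right]

lemma tendsto_integral_sub_add_nhds_zero [NormedSpace ℝ F] (hg : IntegrableOn g (Ioo a b))
    (hx : x ∈ Ioo a b) :
    Tendsto (fun δ => ∫ t in x - δ..x + δ, g t) (𝓝 0) (𝓝 0) := by
  have hab : a ≤ b := (hx.1.trans hx.2).le
  have hint : ∀ {y}, y ∈ Icc a b → IntervalIntegrable g volume a y := fun hy =>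
    intervalIntegrable_of_integrableOn_Ioo hg ⟨le_rfl, hab⟩ hy
  let G : ℝ → F := fun y => ∫ t in a..y, g t
  have hG : ContinuousAt G x := by
    refine ContinuousOn.continuousAt (s := Icc a b) ?_ (Icc_mem_nhds hx.1 hx.2)
    simpa [uIcc_of_le hab] using intervalIntegral.continuousOn_primitive_interval'
      (hint ⟨hab, le_rfl⟩) left_mem_uIcc
  have hright : Tendsto (fun δ : ℝ => x + δ) (𝓝 0) (𝓝 x) := by
    simpa using (continuous_const_add x).tendsto 0
  have hleft : Tendsto (fun δ : ℝ => x - δ) (𝓝 0) (𝓝 x) := by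
    simpa using (continuous_sub_left x).tendsto 0
  have hlim : Tendsto (fun δ => G (x + δ) - G (x - δ)) (𝓝 0) (𝓝 0) := by
    simpa using (hG.tendsto.comp hright).sub (hG.tendsto.comp hleft)
  refine hlim.congr' ?_
  filter_upwards [hright (Icc_mem_nhds hx.1 hx.2), hleft (Icc_mem_nhds hx.1 hx.2)] with δ hr hl
  exact intervalIntegral.integral_interval_sub_left (hint hr) (hint hl)

end IntervalIntegral

section TVSubgradient

variable {E : Type*} [NormedAddCommGroup E] [InnerProductSpace ℝ E]

/-- `p` is a subgradient of the total variation on `Ioo a b` at `u`, with respect to the pairing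
`∫ ⟪p, v⟫`. Only integrability of `p` is required, because functions of bounded variation are
bounded. -/
structure IsTVSubgradient (a b : ℝ) (u p : ℝ → E) : Prop where
  stronglyMeasurable : StronglyMeasurable u
  boundedVariationOn : BoundedVariationOn u (Ioo a b)
  integrableOn : IntegrableOn p (Ioo a b)
  toReal_eVariationOn_add_le : ∀ v, StronglyMeasurable v → BoundedVariationOn v (Ioo a b) →
    (eVariationOn u (Ioo a b)).toReal + ∫ x in Ioo a b, inner ℝ (p x) (v x - u x) ≤
      (eVariationOn v (Ioo a b)).toReal

/-- The primitive of `-p` that vanishes at the right endpoint `b`: for a subgradient `p` of the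
total variation it is the dual field `z`, with `-z' = p` and `‖z‖ ≤ 1`. -/
def dualField (p : ℝ → E) (b x : ℝ) : E := ∫ t in x..b, p t

variable {a b : ℝ} {u p : ℝ → E} {s t x y : ℝ}

lemma integral_eq_dualField_sub_dualField (hp : IntegrableOn p (Ioo a b)) (hx : x ∈ Ioo a b)
    (hy : y ∈ Ioo a b) : ∫ t in x..y, p t = dualField p b x - dualField p b y := by
  have hb : b ∈ Icc a b := ⟨(hx.1.trans hx.2).le, le_rfl⟩
  rw [eq_sub_iff_add_eq, dualField, dualField]
  exact intervalIntegral.integral_add_adjacent_intervals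
    (intervalIntegrable_of_integrableOn_Ioo hp (Ioo_subset_Icc_self hx) (Ioo_subset_Icc_self hy))
    (intervalIntegrable_of_integrableOn_Ioo hp (Ioo_subset_Icc_self hy) hb)

lemma integral_inner_indicator_Ioi [CompleteSpace E] (hp : IntegrableOn p (Ioo a b))
    (hx : x ∈ Ioo a b) (e : E) :
    ∫ r in Ioo a b, inner ℝ (p r) ((Ioi x).indicator (fun _ => e) r) =
      inner ℝ (dualField p b x) e := by
  have hind : ∀ r, inner ℝ (p r) ((Ioi x).indicator (fun _ => e) r) =
      (Ioi x).indicator (fun r => inner ℝ e (p r)) r := fun r => by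
    by_cases hr : r ∈ Ioi x <;> simp [hr, real_inner_comm]
  simp_rw [hind]
  rw [setIntegral_indicator measurableSet_Ioi, Ioo_inter_Ioi, sup_eq_right.2 hx.1.le,
    integral_inner (hp.mono_set (Ioo_subset_Ioo_left hx.1.le)), dualField,
    intervalIntegral.integral_of_le hx.2.le, integral_Ioc_eq_integral_Ioo, real_inner_comm]

lemma integral_inner_le_mul_of_norm_le_indicator (hp : IntegrableOn p (Ioo a b))
    (hst : s ≤ t) (hsub : Icc s t ⊆ Ioo a b) {g : ℝ → E} {C : ℝ}
    (hg : ∀ r, ‖g r‖ ≤ (Icc s t).indicator (fun _ => C) r) :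
    ∫ r in Ioo a b, inner ℝ (p r) (g r) ≤ C * ∫ r in s..t, ‖p r‖ := by
  have hbound : ∀ r, ‖inner ℝ (p r) (g r)‖ ≤ (Icc s t).indicator (fun r => C * ‖p r‖) r := by
    intro r
    refine (norm_inner_le_norm _ _).trans ((mul_le_mul_of_nonneg_left (hg r)
      (norm_nonneg _)).trans_eq ?_)
    by_cases hr : r ∈ Icc s t <;> simp [hr, mul_comm]
  have hint : Integrable ((Icc s t).indicator fun r => C * ‖p r‖) (volume.restrict (Ioo a b)) :=
    (hp.norm.const_mul C).indicator measurableSet_Icc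
  calc ∫ r in Ioo a b, inner ℝ (p r) (g r)
      ≤ ∫ r in Ioo a b, (Icc s t).indicator (fun r => C * ‖p r‖) r :=
        (le_abs_self _).trans (norm_integral_le_of_norm_le hint (Eventually.of_forall hbound))
    _ = C * ∫ r in s..t, ‖p r‖ := by
        rw [setIntegral_indicator measurableSet_Icc, inter_eq_self_of_subset_right hsub,
          integral_const_mul, intervalIntegral.integral_of_le hst, integral_Icc_eq_integral_Ioc]

namespace IsTVSubgradient

variable (h : IsTVSubgradient a b u p)
include h

lemma integrable_inner {φ : ℝ → E} (hφ : StronglyMeasurable φ)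
    (hV : BoundedVariationOn φ (Ioo a b)) :
    Integrable (fun x => inner ℝ (p x) (φ x)) (volume.restrict (Ioo a b)) :=
  integrable_inner_of_memLp (memLp_one_iff_integrable.2 h.integrableOn)
    (memLp_of_boundedVariationOn (q := ∞) measurableSet_Ioo hφ.aestronglyMeasurable hV)

lemma integral_inner_le {φ : ℝ → E} (hφ : StronglyMeasurable φ)
    (hV : BoundedVariationOn φ (Ioo a b)) :
    ∫ x in Ioo a b, inner ℝ (p x) (φ x) ≤ (eVariationOn φ (Ioo a b)).toReal := by
  have hadd : eVariationOn (u + φ) (Ioo a b) ≤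
      eVariationOn u (Ioo a b) + eVariationOn φ (Ioo a b) :=
    eVariationOn_add_le
  have hle := ENNReal.toReal_mono (ENNReal.add_ne_top.2 ⟨h.boundedVariationOn, hV⟩) hadd
  rw [ENNReal.toReal_add h.boundedVariationOn hV] at hle
  have := h.toReal_eVariationOn_add_le (u + φ) (h.stronglyMeasurable.add hφ)
    (ne_top_of_le_ne_top (ENNReal.add_ne_top.2 ⟨h.boundedVariationOn, hV⟩) hadd)
  simp only [Pi.add_apply, add_sub_cancel_left] at this
  linarith

lemma norm_dualField_le_one [CompleteSpace E] (hx : x ∈ Ioo a b) : ‖dualField p b x‖ ≤ 1 := by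
  set z := dualField p b x
  have hjump := eVariationOn_indicator_Ioi_le x z (Ioo a b)
  have hle : ‖z‖ * ‖z‖ ≤ ‖z‖ * 1 := by
    calc ‖z‖ * ‖z‖ = ∫ r in Ioo a b, inner ℝ (p r) ((Ioi x).indicator (fun _ => z) r) := by
          rw [integral_inner_indicator_Ioi h.integrableOn hx, real_inner_self_eq_norm_mul_norm]
      _ ≤ (eVariationOn ((Ioi x).indicator fun _ => z) (Ioo a b)).toReal :=
          h.integral_inner_le (stronglyMeasurable_const.indicator measurableSet_Ioi)
            (ne_top_of_le_ne_top enorm_ne_top hjump)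
      _ ≤ ‖z‖ * 1 := by simpa using ENNReal.toReal_mono enorm_ne_top hjump
  by_contra! hz
  exact hz.not_ge (le_of_mul_le_mul_left hle (by linarith))

lemma variationOnFromTo_le_integral_inner_clamp (hs : s ∈ Ioo a b) (ht : t ∈ Ioo a b)
    (hst : s ≤ t) : variationOnFromTo u (Ioo a b) s t ≤
      ∫ r in Ioo a b, inner ℝ (p r) (u (max s (min t r)) - u s) := by
  let v : ℝ → E := fun r => u r - u (max s (min t r)) - -u s
  have hv : StronglyMeasurable v :=
    (h.stronglyMeasurable.sub (h.stronglyMeasurable.comp_measurable (by fun_prop))).sub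
      stronglyMeasurable_const
  have hV : eVariationOn v (Ioo a b) + eVariationOn u (Ioo a b ∩ Icc s t) =
      eVariationOn u (Ioo a b) := by
    rw [← eVariationOn_sub_comp_clamp_add u hs ht hst, eVariationOn_sub_const]
  have hfin := ENNReal.add_ne_top.1 (hV.trans_ne h.boundedVariationOn)
  have htest := h.toReal_eVariationOn_add_le v hv hfin.1
  have hneg : ∀ r, inner ℝ (p r) (v r - u r) = -inner ℝ (p r) (u (max s (min t r)) - u s) := by
    intro r
    rw [← inner_neg_right]
    congr 1
    simp only [v]
    abel
  rw [← hV, ENNReal.toReal_add hfin.1 hfin.2, ← variationOnFromTo.eq_of_le u _ hst] at htest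
  simp_rw [hneg] at htest
  rw [integral_neg] at htest
  linarith

theorem variationOnFromTo_le [CompleteSpace E] (hs : s ∈ Ioo a b) (ht : t ∈ Ioo a b)
    (hx : x ∈ Icc s t) : variationOnFromTo u (Ioo a b) s t ≤
      inner ℝ (dualField p b x) (u t - u s) +
        variationOnFromTo u (Ioo a b) s t * ∫ r in s..t, ‖p r‖ := by
  have hst : s ≤ t := hx.1.trans hx.2
  have hsub : Icc s t ⊆ Ioo a b := ordConnected_Ioo.out hs ht
  set V := variationOnFromTo u (Ioo a b) s t
  let w : ℝ → E := fun r => u (max s (min t r)) - u s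
  let jump : ℝ → E := (Ioi x).indicator fun _ => u t - u s
  have hjump : Integrable (fun r => inner ℝ (p r) (jump r)) (volume.restrict (Ioo a b)) :=
    h.integrable_inner (stronglyMeasurable_const.indicator measurableSet_Ioi)
      (ne_top_of_le_ne_top enorm_ne_top (eVariationOn_indicator_Ioi_le x _ _))
  have hw : Integrable (fun r => inner ℝ (p r) (w r)) (volume.restrict (Ioo a b)) := by
    refine h.integrable_inner ((h.stronglyMeasurable.comp_measurable (by fun_prop)).sub
      stronglyMeasurable_const) ?_
    exact (eVariationOn_sub_const _ _ _).trans_ne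
      (boundedVariationOn_comp_clamp h.boundedVariationOn hs ht)
  calc V ≤ ∫ r in Ioo a b, inner ℝ (p r) (w r) :=
        h.variationOnFromTo_le_integral_inner_clamp hs ht hst
    _ = (∫ r in Ioo a b, inner ℝ (p r) (jump r))
          + ∫ r in Ioo a b, inner ℝ (p r) (w r - jump r) := by
        simp only [inner_sub_right]
        rw [integral_sub hw hjump, add_sub_cancel]
    _ ≤ inner ℝ (dualField p b x) (u t - u s) + V * ∫ r in s..t, ‖p r‖ := by
        refine add_le_add (integral_inner_indicator_Ioi h.integrableOn (hsub hx) _).le ?_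
        exact integral_inner_le_mul_of_norm_le_indicator h.integrableOn hst hsub
          (norm_clamp_sub_jump_le h.boundedVariationOn.locallyBoundedVariationOn hsub hx)

end IsTVSubgradient

end TVSubgradient

section Regularity

open Topology
open scoped NNReal

variable {E : Type*} [NormedAddCommGroup E] [InnerProductSpace ℝ E]
variable {a b : ℝ} {f u p : ℝ → E} {t x y m δ ε lam c d : ℝ} {L : ℝ≥0}

namespace IsTVSubgradient

variable (h : IsTVSubgradient a b u p)
include h

lemma variationOnFromTo_sub_translate (hm : m ∈ Ioo a b) (hsub : Icc (x - δ) (x + δ) ⊆ Ioo a b)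
    (ht : t ∈ Icc x (x + δ)) : variationOnFromTo u (Ioo a b) (t - δ) t =
      variationOnFromTo u (Ioo a b) m t - variationOnFromTo u (Ioo a b) m (t - δ) := by
  have hδ : 0 ≤ δ := by linarith [ht.1.trans ht.2]
  rw [eq_sub_iff_add_eq']
  exact variationOnFromTo.add h.boundedVariationOn.locallyBoundedVariationOn hm
    (hsub ⟨by linarith [ht.1], by linarith [ht.2]⟩) (hsub ⟨by linarith [ht.1], ht.2⟩)

lemma intervalIntegrable_variationOnFromTo (hm : m ∈ Ioo a b) (hx : x ∈ Ioo a b)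
    (hy : y ∈ Ioo a b) : IntervalIntegrable (variationOnFromTo u (Ioo a b) m) volume x y :=
  ((variationOnFromTo.monotoneOn h.boundedVariationOn.locallyBoundedVariationOn hm).mono
    (ordConnected_Ioo.uIcc_subset hx hy)).intervalIntegrable

lemma intervalIntegrable_variationOnFromTo_translate (hδ : 0 ≤ δ)
    (hsub : Icc (x - δ) (x + δ) ⊆ Ioo a b) :
    IntervalIntegrable (fun t => variationOnFromTo u (Ioo a b) (t - δ) t) volume x (x + δ) := by
  have hx : x ∈ Ioo a b := hsub ⟨by linarith, by linarith⟩
  have hT := h.intervalIntegrable_variationOnFromTo hx (hsub ⟨le_rfl, by linarith⟩)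
    (hsub ⟨by linarith, le_rfl⟩)
  refine (intervalIntegrable_sub_translate hδ hT).congr fun t ht => ?_
  rw [uIoc_of_le (by linarith)] at ht
  exact (h.variationOnFromTo_sub_translate hx hsub (Ioc_subset_Icc_self ht)).symm

lemma integral_variationOnFromTo_translate (hm : m ∈ Ioo a b) (hδ : 0 ≤ δ)
    (hsub : Icc (x - δ) (x + δ) ⊆ Ioo a b) :
    ∫ t in x..x + δ, variationOnFromTo u (Ioo a b) (t - δ) t =
      (∫ t in x..x + δ, variationOnFromTo u (Ioo a b) m t) -
        ∫ t in x - δ..x, variationOnFromTo u (Ioo a b) m t := by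
  rw [← integral_sub_translate hδ (h.intervalIntegrable_variationOnFromTo hm
    (hsub ⟨le_rfl, by linarith⟩) (hsub ⟨by linarith, le_rfl⟩))]
  refine intervalIntegral.integral_congr fun t ht => ?_
  rw [uIcc_of_le (by linarith)] at ht
  exact h.variationOnFromTo_sub_translate hm hsub ht

lemma intervalIntegrable_inner_sub_translate (hδ : 0 ≤ δ) (hsub : Icc (x - δ) (x + δ) ⊆ Ioo a b)
    (e : E) : IntervalIntegrable (fun t => inner ℝ e (u t - u (t - δ))) volume x (x + δ) := by
  have hu : IntegrableOn u (Ioo a b) := memLp_one_iff_integrable.1 (memLp_of_boundedVariationOn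
    measurableSet_Ioo h.stronglyMeasurable.aestronglyMeasurable h.boundedVariationOn)
  have hu' : IntervalIntegrable u volume (x - δ) (x + δ) :=
    intervalIntegrable_of_integrableOn_Ioo hu (Ioo_subset_Icc_self (hsub ⟨le_rfl, by linarith⟩))
      (Ioo_subset_Icc_self (hsub ⟨by linarith, le_rfl⟩))
  exact ⟨(intervalIntegrable_sub_translate hδ hu').1.const_inner e,
    (intervalIntegrable_sub_translate hδ hu').2.const_inner e⟩

lemma integral_inner_sub_translate_le_norm_mul (hδ : 0 ≤ δ)
    (hsub : Icc (x - δ) (x + δ) ⊆ Ioo a b) (e : E) :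
    ∫ t in x..x + δ, inner ℝ e (u t - u (t - δ)) ≤
      ‖e‖ * ∫ t in x..x + δ, variationOnFromTo u (Ioo a b) (t - δ) t := by
  rw [← intervalIntegral.integral_const_mul]
  refine intervalIntegral.integral_mono_on (by linarith)
    (h.intervalIntegrable_inner_sub_translate hδ hsub _)
    ((h.intervalIntegrable_variationOnFromTo_translate hδ hsub).const_mul _) fun t ht => ?_
  have hst : t - δ ≤ t := by linarith
  refine (real_inner_le_norm _ _).trans (mul_le_mul_of_nonneg_left ?_ (norm_nonneg _))
  exact norm_sub_le_variationOnFromTo h.boundedVariationOn.locallyBoundedVariationOn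
    (fun r hr => hsub ⟨by linarith [ht.1, hr.1], hr.2.trans ht.2⟩) ⟨hst, le_rfl⟩ ⟨le_rfl, hst⟩

variable [CompleteSpace E]

lemma one_sub_mul_integral_variationOnFromTo_le (hδ : 0 ≤ δ)
    (hsub : Icc (x - δ) (x + δ) ⊆ Ioo a b) :
    (1 - ∫ r in x - δ..x + δ, ‖p r‖) * ∫ t in x..x + δ, variationOnFromTo u (Ioo a b) (t - δ) t ≤
      ∫ t in x..x + δ, inner ℝ (dualField p b x) (u t - u (t - δ)) := by
  rw [← intervalIntegral.integral_const_mul]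
  refine intervalIntegral.integral_mono_on (by linarith)
    ((h.intervalIntegrable_variationOnFromTo_translate hδ hsub).const_mul _)
    (h.intervalIntegrable_inner_sub_translate hδ hsub _) fun t ht => ?_
  have hleft : t - δ ∈ Ioo a b := hsub ⟨by linarith [ht.1], by linarith [ht.2]⟩
  have hright : t ∈ Ioo a b := hsub ⟨by linarith [ht.1], ht.2⟩
  have hV := h.variationOnFromTo_le hleft hright ⟨by linarith [ht.2], ht.1⟩
  have hp : ∫ r in t - δ..t, ‖p r‖ ≤ ∫ r in x - δ..x + δ, ‖p r‖ :=
    intervalIntegral.integral_mono_interval (by linarith [ht.1]) (by linarith) ht.2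
      (Eventually.of_forall fun r => norm_nonneg (p r))
      (intervalIntegrable_of_integrableOn_Ioo h.integrableOn
        (Ioo_subset_Icc_self (hsub ⟨le_rfl, by linarith⟩))
        (Ioo_subset_Icc_self (hsub ⟨by linarith, le_rfl⟩))).norm
  have := mul_le_mul_of_nonneg_left hp
    (variationOnFromTo.nonneg_of_le u (Ioo a b) (by linarith : t - δ ≤ t))
  linarith

-- At a maximum point of `‖z‖`, the second difference of `⟪z x, z⟫` is nonpositive.
lemma integral_inner_sub_translate_nonneg_of_norm_eq_one (hδ : 0 ≤ δ)
    (hsub : Icc (x - δ) (x + δ) ⊆ Ioo a b) (hz : ‖dualField p b x‖ = 1) :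
    0 ≤ ∫ t in x..x + δ, inner ℝ (dualField p b x) (p t - p (t - δ)) := by
  set z := dualField p b x
  have hl : x - δ ∈ Ioo a b := hsub ⟨le_rfl, by linarith⟩
  have hr : x + δ ∈ Ioo a b := hsub ⟨by linarith, le_rfl⟩
  have hx : x ∈ Ioo a b := hsub ⟨by linarith, by linarith⟩
  have hp := intervalIntegrable_of_integrableOn_Ioo h.integrableOn (Ioo_subset_Icc_self hl)
    (Ioo_subset_Icc_self hr)
  have hle : ∀ y ∈ Ioo a b, inner ℝ z (dualField p b y) ≤ 1 := fun y hy =>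
    (real_inner_le_norm z _).trans (by rw [hz, one_mul]; exact h.norm_dualField_le_one hy)
  have hzz : inner ℝ z z = (1 : ℝ) := by rw [real_inner_self_eq_norm_mul_norm, hz, one_mul]
  have hinner := (innerSL ℝ z).intervalIntegral_comp_comm (intervalIntegrable_sub_translate hδ hp)
  simp only [innerSL_apply_apply] at hinner
  rw [hinner, integral_sub_translate hδ hp,
    integral_eq_dualField_sub_dualField h.integrableOn hx hr,
    integral_eq_dualField_sub_dualField h.integrableOn hl hx]
  simp only [inner_sub_right]
  linarith [hle _ hl, hle _ hr]

lemma integral_inner_sub_translate_le_of_norm_eq_one (hlam : 0 ≤ lam) (hδ : 0 ≤ δ)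
    (hsub : Icc (x - δ) (x + δ) ⊆ Ioo a b)
    (huf : ∀ t ∈ Icc (x - δ) (x + δ), u t = f t - lam • p t)
    (hf : LipschitzOnWith L f (Icc (x - δ) (x + δ))) (hz : ‖dualField p b x‖ = 1) :
    ∫ t in x..x + δ, inner ℝ (dualField p b x) (u t - u (t - δ)) ≤ L * δ ^ 2 := by
  set z := dualField p b x
  have hl : x - δ ∈ Ioo a b := hsub ⟨le_rfl, by linarith⟩
  have hr : x + δ ∈ Ioo a b := hsub ⟨by linarith, le_rfl⟩
  have hp := intervalIntegrable_sub_translate hδ (intervalIntegrable_of_integrableOn_Ioo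
    h.integrableOn (Ioo_subset_Icc_self hl) (Ioo_subset_Icc_self hr))
  have hpz : IntervalIntegrable (fun t => inner ℝ z (p t - p (t - δ))) volume x (x + δ) :=
    ⟨hp.1.const_inner z, hp.2.const_inner z⟩
  have hpoint : ∀ t ∈ Icc x (x + δ),
      inner ℝ z (u t - u (t - δ)) ≤ L * δ - lam * inner ℝ z (p t - p (t - δ)) := by
    intro t ht
    have ht₁ : t ∈ Icc (x - δ) (x + δ) := ⟨by linarith [ht.1], ht.2⟩
    have ht₂ : t - δ ∈ Icc (x - δ) (x + δ) := ⟨by linarith [ht.1], by linarith [ht.2]⟩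
    have hfδ : inner ℝ z (f t - f (t - δ)) ≤ L * δ := by
      refine (real_inner_le_norm _ _).trans ?_
      simpa [hz, abs_of_nonneg hδ] using hf.norm_sub_le ht₁ ht₂
    have hsplit : u t - u (t - δ) = f t - f (t - δ) - lam • (p t - p (t - δ)) := by
      rw [huf t ht₁, huf _ ht₂, smul_sub]
      abel
    rw [hsplit, inner_sub_right, inner_smul_right]
    linarith
  have hcontact := h.integral_inner_sub_translate_nonneg_of_norm_eq_one hδ hsub hz
  calc ∫ t in x..x + δ, inner ℝ z (u t - u (t - δ))
      ≤ ∫ t in x..x + δ, (L * δ - lam * inner ℝ z (p t - p (t - δ))) :=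
        intervalIntegral.integral_mono_on (by linarith)
          (h.intervalIntegrable_inner_sub_translate hδ hsub z)
          (intervalIntegrable_const.sub (hpz.const_mul lam)) hpoint
    _ = L * δ ^ 2 - lam * ∫ t in x..x + δ, inner ℝ z (p t - p (t - δ)) := by
        rw [intervalIntegral.integral_sub intervalIntegrable_const (hpz.const_mul lam),
          intervalIntegral.integral_const, intervalIntegral.integral_const_mul]
        simp only [add_sub_cancel_left, smul_eq_mul]
        ring
    _ ≤ L * δ ^ 2 := by linarith [mul_nonneg hlam hcontact]

lemma eventually_integral_sub_integral_variationOnFromTo_le (hlam : 0 ≤ lam)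
    (hU : Ioo c d ⊆ Ioo a b) (huf : ∀ t ∈ Ioo c d, u t = f t - lam • p t)
    (hf : LipschitzOnWith L f (Ioo c d)) (hm : m ∈ Ioo a b) (hx : x ∈ Ioo c d) (hε : 0 < ε) :
    ∀ᶠ δ in 𝓝[>] (0 : ℝ), (∫ t in x..x + δ, variationOnFromTo u (Ioo a b) m t) -
      (∫ t in x - δ..x, variationOnFromTo u (Ioo a b) m t) ≤ (L + ε) * δ ^ 2 := by
  have hmass : Tendsto (fun δ => ∫ r in x - δ..x + δ, ‖p r‖) (𝓝[>] 0) (𝓝 0) :=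
    (tendsto_integral_sub_add_nhds_zero h.integrableOn.norm (hU hx)).mono_left nhdsWithin_le_nhds
  have hnear := eventually_Icc_sub_add_subset_Ioo hx.1 hx.2
  rcases (h.norm_dualField_le_one (hU hx)).eq_or_lt with hz | hz
  · have hε' : 0 < ε / (L + ε) := by positivity
    filter_upwards [hnear, hmass.eventually_lt_const hε'] with δ ⟨hδ, hsub⟩ hκ
    rw [← h.integral_variationOnFromTo_translate hm hδ.le (hsub.trans hU)]
    have hV := (h.one_sub_mul_integral_variationOnFromTo_le hδ.le (hsub.trans hU)).trans
      (h.integral_inner_sub_translate_le_of_norm_eq_one hlam hδ.le (hsub.trans hU)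
        (fun t ht => huf t (hsub ht)) (hf.mono hsub) hz)
    set κ := ∫ r in x - δ..x + δ, ‖p r‖
    have hκ₁ : κ < 1 := hκ.trans_le (div_le_one_of_le₀ (by simp) (by positivity))
    have hLκ : (L : ℝ) ≤ (1 - κ) * (L + ε) := by
      rw [lt_div_iff₀ (by positivity)] at hκ
      linarith
    refine le_of_mul_le_mul_left (hV.trans ?_) (sub_pos.2 hκ₁)
    rw [← mul_assoc]
    exact mul_le_mul_of_nonneg_right hLκ (sq_nonneg δ)
  · filter_upwards [hnear, hmass.eventually_lt_const (sub_pos.2 hz)] with δ ⟨hδ, hsub⟩ hκ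
    rw [← h.integral_variationOnFromTo_translate hm hδ.le (hsub.trans hU)]
    have hV := (h.one_sub_mul_integral_variationOnFromTo_le hδ.le (hsub.trans hU)).trans
      (h.integral_inner_sub_translate_le_norm_mul hδ.le (hsub.trans hU) _)
    refine le_trans (nonpos_of_mul_nonpos_right
      (a := 1 - ‖dualField p b x‖ - ∫ r in x - δ..x + δ, ‖p r‖) ?_ ?_) (by positivity)
    all_goals linarith

theorem lipschitzOnWith (hlam : 0 ≤ lam) (hU : Ioo c d ⊆ Ioo a b)
    (huf : ∀ t ∈ Ioo c d, u t = f t - lam • p t) (hf : LipschitzOnWith L f (Ioo c d)) :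
    LipschitzOnWith L u (Ioo c d) := by
  have hV := h.boundedVariationOn.locallyBoundedVariationOn
  refine LipschitzOnWith.of_dist_le_mul fun x hx y hy => ?_
  wlog hxy : x ≤ y generalizing x y
  · simpa only [dist_comm] using this y hy x hx (le_of_not_ge hxy)
  have hT : MonotoneOn (variationOnFromTo u (Ioo a b) x) (Ioo c d) :=
    (variationOnFromTo.monotoneOn hV (hU hx)).mono hU
  have hsecond : ∀ t ∈ Ioo c d, ∀ ε > 0, ∃ᶠ δ in 𝓝[>] (0 : ℝ),
      (∫ r in t..t + δ, variationOnFromTo u (Ioo a b) x r) -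
        (∫ r in t - δ..t, variationOnFromTo u (Ioo a b) x r) ≤ (L + ε) * δ ^ 2 := fun t ht ε hε =>
    (h.eventually_integral_sub_integral_variationOnFromTo_le hlam hU huf hf
      (hU hx) ht hε).frequently
  calc dist (u x) (u y) ≤ variationOnFromTo u (Ioo a b) x y := by
        rw [dist_eq_norm]
        exact norm_sub_le_variationOnFromTo hV (ordConnected_Ioo.out (hU hx) (hU hy))
          ⟨le_rfl, hxy⟩ ⟨hxy, le_rfl⟩
    _ = variationOnFromTo u (Ioo a b) x y - variationOnFromTo u (Ioo a b) x x := by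
        rw [variationOnFromTo.self, sub_zero]
    _ ≤ L * (y - x) := sub_le_mul_sub_of_frequently_integral_sub_integral_le hT hsecond hx hy hxy
    _ = L * dist x y := by rw [dist_comm, Real.dist_eq, abs_of_nonneg (sub_nonneg.2 hxy)]

end IsTVSubgradient

end Regularity

section FirstVariation

open Topology

variable {E : Type*} [NormedAddCommGroup E]

/-- `IsMinimizer` for functions with values in an arbitrary inner product space, where Borel
measurability is replaced by strong measurability. -/
structure IsROFMinimizer (lam a b : ℝ) (f u : ℝ → E) : Prop where
  stronglyMeasurable : StronglyMeasurable u
  memLp : MemLp u 2 (volume.restrict (Ioo a b))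
  energy_le : ∀ v, StronglyMeasurable v → MemLp v 2 (volume.restrict (Ioo a b)) →
    eVariationOn u (Ioo a b) +
        ENNReal.ofReal ((1 / (2 * lam)) * ∫ x in Ioo a b, ‖u x - f x‖ ^ 2) ≤
      eVariationOn v (Ioo a b) +
        ENNReal.ofReal ((1 / (2 * lam)) * ∫ x in Ioo a b, ‖v x - f x‖ ^ 2)

variable {lam a b : ℝ} {f u v : ℝ → E}

namespace IsROFMinimizer

variable (hu : IsROFMinimizer lam a b f u)
include hu

lemma boundedVariationOn : BoundedVariationOn u (Ioo a b) := by
  have hle := hu.energy_le 0 stronglyMeasurable_zero MemLp.zero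
  rw [eVariationOn.constant_on (f := (0 : ℝ → E))
    (subsingleton_singleton.anti (image_subset_iff.2 fun _ _ => rfl)), zero_add] at hle
  exact ne_top_of_le_ne_top ENNReal.ofReal_ne_top (le_self_add.trans hle)

lemma toReal_energy_le (hlam : 0 < lam) (hv : StronglyMeasurable v)
    (hV : BoundedVariationOn v (Ioo a b)) :
    (eVariationOn u (Ioo a b)).toReal + (1 / (2 * lam)) * ∫ x in Ioo a b, ‖u x - f x‖ ^ 2 ≤
      (eVariationOn v (Ioo a b)).toReal + (1 / (2 * lam)) * ∫ x in Ioo a b, ‖v x - f x‖ ^ 2 := by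
  have hfid : ∀ w : ℝ → E, 0 ≤ (1 / (2 * lam)) * ∫ x in Ioo a b, ‖w x - f x‖ ^ 2 := fun w =>
    mul_nonneg (by positivity) (integral_nonneg fun x => by positivity)
  have hle := ENNReal.toReal_mono (ENNReal.add_ne_top.2 ⟨hV, ENNReal.ofReal_ne_top⟩)
    (hu.energy_le v hv (memLp_of_boundedVariationOn measurableSet_Ioo hv.aestronglyMeasurable hV))
  rwa [ENNReal.toReal_add hu.boundedVariationOn ENNReal.ofReal_ne_top,
    ENNReal.toReal_add hV ENNReal.ofReal_ne_top, ENNReal.toReal_ofReal (hfid u),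
    ENNReal.toReal_ofReal (hfid v)] at hle

variable [InnerProductSpace ℝ E]

lemma toReal_eVariationOn_add_integral_le (hlam : 0 < lam)
    (hf : MemLp f 2 (volume.restrict (Ioo a b))) (hv : StronglyMeasurable v)
    (hV : BoundedVariationOn v (Ioo a b)) {t : ℝ} (ht : t ∈ Ioo (0 : ℝ) 1) :
    (eVariationOn u (Ioo a b)).toReal +
        ∫ x in Ioo a b, inner ℝ (lam⁻¹ • (f x - u x)) (v x - u x) ≤
      (eVariationOn v (Ioo a b)).toReal +
        t * ((1 / (2 * lam)) * ∫ x in Ioo a b, ‖v x - u x‖ ^ 2) := by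
  let w : ℝ → E := (1 - t) • u + t • v
  have hw : StronglyMeasurable w := (hu.stronglyMeasurable.const_smul _).add (hv.const_smul t)
  have hconv := convexOn_toReal_eVariationOn (E := E) (s := Ioo a b)
  have hWV : (eVariationOn w (Ioo a b)).toReal ≤
      (1 - t) * (eVariationOn u (Ioo a b)).toReal + t * (eVariationOn v (Ioo a b)).toReal :=
    hconv.2 hu.boundedVariationOn hV (sub_nonneg.2 ht.2.le) ht.1.le (sub_add_cancel 1 t)
  have henergy := hu.toReal_energy_le hlam hw
    (hconv.1 hu.boundedVariationOn hV (sub_nonneg.2 ht.2.le) ht.1.le (sub_add_cancel 1 t))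
  have hwf : ∀ x, w x - f x = u x - f x + t • (v x - u x) := fun x => by
    simp only [w, Pi.add_apply, Pi.smul_apply]
    module
  simp_rw [hwf] at henergy
  have hvu : MemLp (fun x => v x - u x) 2 (volume.restrict (Ioo a b)) :=
    (memLp_of_boundedVariationOn measurableSet_Ioo hv.aestronglyMeasurable hV).sub hu.memLp
  have huf : MemLp (fun x => u x - f x) 2 (volume.restrict (Ioo a b)) := hu.memLp.sub hf
  rw [integral_norm_add_smul_sq huf hvu] at henergy
  have hp : ∀ x, inner ℝ (lam⁻¹ • (f x - u x)) (v x - u x) =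
      -lam⁻¹ * inner ℝ (u x - f x) (v x - u x) := fun x => by
    rw [← neg_sub (u x), smul_neg, inner_neg_left, real_inner_smul_left, neg_mul]
  simp_rw [hp]
  rw [integral_const_mul]
  refine le_of_mul_le_mul_left ?_ ht.1
  simp only [one_div, mul_inv] at henergy ⊢
  linarith

lemma isTVSubgradient (hlam : 0 < lam) (hf : MemLp f 2 (volume.restrict (Ioo a b))) :
    IsTVSubgradient a b u fun x => lam⁻¹ • (f x - u x) where
  stronglyMeasurable := hu.stronglyMeasurable
  boundedVariationOn := hu.boundedVariationOn
  integrableOn := ((hf.sub hu.memLp).integrable one_le_two).smul lam⁻¹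
  toReal_eVariationOn_add_le v hv hV := by
    set A := (eVariationOn v (Ioo a b)).toReal
    set Q := (1 / (2 * lam)) * ∫ x in Ioo a b, ‖v x - u x‖ ^ 2
    have hlim : Tendsto (fun t => A + t * Q) (𝓝[>] 0) (𝓝 A) := by
      have : ContinuousAt (fun t => A + t * Q) 0 := by fun_prop
      simpa [ContinuousAt] using this.tendsto.mono_left nhdsWithin_le_nhds
    refine ge_of_tendsto hlim ?_
    filter_upwards [Ioo_mem_nhdsGT zero_lt_one] with t ht
    exact hu.toReal_eVariationOn_add_integral_le hlam hf hv hV ht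

end IsROFMinimizer

end FirstVariation

lemma sqIntOn_iff_memLp {n : ℕ} {w : ℝ → EuclideanSpace ℝ (Fin n)} {S : Set ℝ}
    (hw : Measurable w) : SqIntOn w S ↔ MemLp w 2 (volume.restrict S) :=
  (memLp_two_iff_integrable_sq_norm hw.aestronglyMeasurable).symm

lemma IsMinimizer.isROFMinimizer {n : ℕ} {lam a b : ℝ} {f u : ℝ → EuclideanSpace ℝ (Fin n)}
    (hu : IsMinimizer lam a b f u) : IsROFMinimizer lam a b f u where
  stronglyMeasurable := hu.1.stronglyMeasurable
  memLp := (sqIntOn_iff_memLp hu.1).1 hu.2.1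
  energy_le v hv hv₂ := hu.2.2 v hv.measurable ((sqIntOn_iff_memLp hv.measurable).2 hv₂)

open scoped NNReal in
theorem minimizer_lipschitz_of_datum_lipschitz_general {E : Type*} [NormedAddCommGroup E]
    [InnerProductSpace ℝ E] [CompleteSpace E] {lam a b c d : ℝ} {f u : ℝ → E} {L : ℝ≥0}
    (hlam : 0 < lam) (hf : MemLp f 2 (volume.restrict (Ioo a b)))
    (hu : IsROFMinimizer lam a b f u) (hU : Ioo c d ⊆ Ioo a b)
    (hfLip : LipschitzOnWith L f (Ioo c d)) : LipschitzOnWith L u (Ioo c d) :=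
  (hu.isTVSubgradient hlam hf).lipschitzOnWith hlam.le hU
    (fun t _ => by rw [smul_inv_smul₀ hlam.ne', sub_sub_cancel]) hfLip

/-- if the datum `f` is Lipschitz with constant `L` on an open subinterval
`U = Ioo c d` of `I`, then the ROF minimizer has a representative (equal to `u` a.e. on `I`)
which is Lipschitz with the same constant `L` on `U`. -/
theorem minimizer_lipschitz_of_datum_lipschitz
    {n : ℕ} (hn : 1 ≤ n) (a b : ℝ) (hab : a < b) (lam : ℝ) (hlam : 0 < lam)
    (f : ℝ → EuclideanSpace ℝ (Fin n)) (hf_meas : Measurable f)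
    (hf_sq : SqIntOn f (Set.Ioo a b))
    (u : ℝ → EuclideanSpace ℝ (Fin n)) (hu : IsMinimizer lam a b f u)
    (c d : ℝ) (hU : Set.Ioo c d ⊆ Set.Ioo a b)
    (L : ℝ) (hL : 0 ≤ L)
    (hfLip : ∀ x ∈ Set.Ioo c d, ∀ y ∈ Set.Ioo c d, ‖f y - f x‖ ≤ L * |y - x|) :
    ∃ ubar : ℝ → EuclideanSpace ℝ (Fin n),
      (∀ᵐ x ∂(MeasureTheory.volume.restrict (Set.Ioo a b)), ubar x = u x) ∧
      ∀ x ∈ Set.Ioo c d, ∀ y ∈ Set.Ioo c d, ‖ubar y - ubar x‖ ≤ L * |y - x| := by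
  lift L to NNReal using hL
  have hf : LipschitzOnWith L f (Ioo c d) := LipschitzOnWith.of_dist_le_mul fun x hx y hy => by
    simpa only [dist_eq_norm, Real.norm_eq_abs] using hfLip y hy x hx
  have hLip := minimizer_lipschitz_of_datum_lipschitz_general hlam
    ((sqIntOn_iff_memLp hf_meas).1 hf_sq) hu.isROFMinimizer hU hf
  exact ⟨u, Eventually.of_forall fun _ => rfl, fun x hx y hy => hLip.norm_sub_le hy hx⟩
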